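/- arXiv:2008.09364 — 3 statements merged into one kernel-verified Lean document; each statement's English description precedes it below -/
import Mathlib

section
/- Let p/q be an irreducible fraction with 0 < p < q and gcd(p,q) = 1, and let (x/r, y/s) be its pair of parents. Then i(r(w(p/q))) = w(s/q), where r(u) denotes the reversal of an LR word u and i(u) denotes the word obtained from u by replacing every letter L by R and every letter R by L. -/
/-- The two-letter alphabet for `LR` words. -/
inductive LR : Type
  | L : LR
  | R : LR
  deriving DecidableEq

/-- The operation `i`: replace every `L` by `R` and every `R` by `L`. -/
def LR.flip : LR → LR
  | .L => .R
  | .R => .L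

/-- The Stern–Brocot path (recorded from the root `1/2` downwards) of the fraction
`p/q ∈ (0,1)`: at each step we pass to the left or right subinterval. -/
def sbPath (p q : ℕ) : List LR :=
  if h1 : 0 < p ∧ p + p < q then
    LR.L :: sbPath p (q - p)
  else if h2 : p < q ∧ q < p + p then
    LR.R :: sbPath (p + p - q) p
  else []
termination_by q
decreasing_by
  · omega
  · omega

/-- The `LR` word `w(α)` of a rational `α ∈ (0,1)`: the sequence of `L`/`R` steps from
the vertex `1/2` of the Stern–Brocot tree down to `α`, arranged from right to left.
It satisfies `w(1/2) = ∅` and, if `α` has parents `(β, γ)` with reduced denominators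
`b < c` (resp. `b > c`), `w(α) = L · w(γ)` (resp. `w(α) = R · w(β)`). -/
def w (α : ℚ) : List LR := (sbPath α.num.toNat α.den).reverse

/-- `(x/r, y/s)` is the pair of parents of `α`: they are Farey neighbors
(`x, y ≥ 0`, `r, s ≥ 1`, `r*y - x*s = 1`) and `α` is their Farey mediant. -/
def IsParents (x r y s : ℕ) (α : ℚ) : Prop :=
  1 ≤ r ∧ 1 ≤ s ∧ r * y = x * s + 1 ∧
    α = ((x : ℚ) + (y : ℚ)) / ((r : ℚ) + (s : ℚ))

/-!
Attach to `p/q`, with right parent `y/s`, the matrix with rows `(y, p)` and `(s, q)`. A step down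
the tree multiplies it on the right by a fixed matrix for `L` or `R`, starting from the matrix `S`
of `1/2`, so the vertex with path `c₁ ⋯ cₙ` has the matrix `S C₁ ⋯ Cₙ`. Since `S` is symmetric and
`Cᵀ S = S C'`, where `C'` belongs to the other letter, transposition reverses and flips the path;
and it replaces the fraction `p/q` by `s/q`. The same identity turns prepending a letter to the path
into a left multiplication, which acts on `p/q` as the inverse of a step of `sbPath`.
-/

open scoped Matrix

/-- The matrix by which a step down the Stern–Brocot tree multiplies, on the right, the matrix
`!![y, p; s, q]` of a vertex `p/q` with right parent `y/s`. The left parent is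
`(p - y)/(q - s)`, whence the negative entry. -/
def LR.stepMatrix : LR → Matrix (Fin 2) (Fin 2) ℤ
  | .L => !![0, -1; 1, 2]
  | .R => !![1, 1; 0, 1]

/-- The matrix `!![y, p; s, q]` of the vertex `p/q` with right parent `y/s` reached from `1/2` by
the path `u`, read from the root downwards. -/
def sbMatrix (u : List LR) : Matrix (Fin 2) (Fin 2) ℤ :=
  !![1, 1; 1, 2] * (u.map LR.stepMatrix).prod

theorem sbMatrix_nil : sbMatrix [] = !![1, 1; 1, 2] := by
  simp [sbMatrix]

theorem sbMatrix_append_singleton (u : List LR) (c : LR) :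
    sbMatrix (u ++ [c]) = sbMatrix u * c.stepMatrix := by
  simp [sbMatrix]

theorem LR.transpose_stepMatrix_flip_mul (c : LR) :
    c.flip.stepMatrixᵀ * !![1, 1; 1, 2] = !![1, 1; 1, 2] * c.stepMatrix := by
  cases c <;> decide

theorem sbMatrix_cons (c : LR) (u : List LR) :
    sbMatrix (c :: u) = c.flip.stepMatrixᵀ * sbMatrix u := by
  simp only [sbMatrix, List.map_cons, List.prod_cons, ← Matrix.mul_assoc,
    LR.transpose_stepMatrix_flip_mul]

theorem transpose_sbMatrix (u : List LR) :
    (sbMatrix u)ᵀ = sbMatrix (u.map LR.flip).reverse := by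
  induction u with
  | nil => simp [sbMatrix_nil, ← Matrix.ext_iff, Fin.forall_fin_two]
  | cons c u ih =>
    rw [sbMatrix_cons, Matrix.transpose_mul, Matrix.transpose_transpose, ih, List.map_cons,
      List.reverse_cons, sbMatrix_append_singleton]

theorem sbMatrix_cons_L_col_one (u : List LR) :
    sbMatrix (.L :: u) 0 1 = sbMatrix u 0 1 ∧
      sbMatrix (.L :: u) 1 1 = sbMatrix u 0 1 + sbMatrix u 1 1 := by
  simp [sbMatrix_cons, LR.flip, LR.stepMatrix, Matrix.mul_apply]

theorem sbMatrix_cons_R_col_one (u : List LR) :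
    sbMatrix (.R :: u) 0 1 = sbMatrix u 1 1 ∧
      sbMatrix (.R :: u) 1 1 = 2 * sbMatrix u 1 1 - sbMatrix u 0 1 := by
  simp [sbMatrix_cons, LR.flip, LR.stepMatrix, Matrix.mul_apply, neg_add_eq_sub]

theorem sbMatrix_num_pos_and_lt_den (u : List LR) :
    0 < sbMatrix u 0 1 ∧ sbMatrix u 0 1 < sbMatrix u 1 1 := by
  induction u with
  | nil => simp [sbMatrix_nil]
  | cons c u ih =>
    cases c
    · have := sbMatrix_cons_L_col_one u
      lia
    · have := sbMatrix_cons_R_col_one u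
      lia

theorem sbPath_of_two_mul_lt {p q : ℕ} (hp : 0 < p) (h : 2 * p < q) :
    sbPath p q = .L :: sbPath p (q - p) := by
  rw [sbPath, dif_pos (by lia)]

theorem sbPath_of_lt_two_mul {p q : ℕ} (hpq : p < q) (h : q < 2 * p) :
    sbPath p q = .R :: sbPath (p + p - q) p := by
  rw [sbPath, dif_neg (by lia), dif_pos (by lia)]

theorem sbPath_eq_of_sbMatrix {u : List LR} {p q : ℕ} (hp : sbMatrix u 0 1 = p)
    (hq : sbMatrix u 1 1 = q) : sbPath p q = u := by
  induction u generalizing p q with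
  | nil =>
    obtain rfl : p = 1 := by simpa [sbMatrix_nil, eq_comm] using hp
    obtain rfl : q = 2 := by
      have : (2 : ℤ) = q := by simpa [sbMatrix_nil] using hq
      lia
    simp [sbPath]
  | cons c u ih =>
    have hu := sbMatrix_num_pos_and_lt_den u
    cases c
    · have hcol := sbMatrix_cons_L_col_one u
      rw [sbPath_of_two_mul_lt (by lia) (by lia), ih (by lia) (by lia)]
    · have hcol := sbMatrix_cons_R_col_one u
      rw [sbPath_of_lt_two_mul (by lia) (by lia), ih (by lia) (by lia)]

theorem w_div {p q : ℕ} (hq : 0 < q) (hpq : p.Coprime q) :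
    w ((p : ℚ) / q) = (sbPath p q).reverse := by
  have hnum : ((p : ℚ) / q).num = p :=
    Rat.num_div_eq_of_coprime (mod_cast hq) (by simpa using hpq)
  have hden : (((p : ℚ) / q).den : ℤ) = q :=
    Rat.den_div_eq_of_coprime (a := p) (mod_cast hq) (by simpa using hpq)
  rw [w, hnum, Int.toNat_natCast, Int.natCast_inj.mp hden]

theorem coprime_of_farey {x r y s : ℕ} (h : r * y = x * s + 1) : x.Coprime r := by
  rw [← Nat.isCoprime_iff_coprime]
  refine ⟨-s, y, ?_⟩
  zify at h
  linarith

theorem right_num_pos_of_farey {x r y s : ℕ} (h : r * y = x * s + 1) : 0 < y :=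
  Nat.pos_of_ne_zero (by rintro rfl; simp at h)

theorem left_num_lt_den_of_farey {x r y s : ℕ} (h : r * y = x * s + 1) (hys : y ≤ s) :
    x < r := by
  have : x * s < r * s := by
    calc x * s < r * y := by lia
      _ ≤ r * s := by gcongr
  exact lt_of_mul_lt_mul_right this s.zero_le

theorem right_num_le_den_of_farey {x r y s : ℕ} (h : r * y = x * s + 1) (hs : 0 < s)
    (hxr : x < r) : y ≤ s := by
  by_contra! hsy
  have : (x + 1) * (s + 1) ≤ r * y := Nat.mul_le_mul hxr hsy
  lia

theorem left_num_lt_right_num_of_farey {x r y s : ℕ} (h : r * y = x * s + 1) (hrs : r ≤ s) :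
    x < y := by
  have : x * r < y * r := by
    calc x * r ≤ x * s := by gcongr
      _ < y * r := by lia
  exact lt_of_mul_lt_mul_right this r.zero_le

theorem right_num_le_left_num_of_farey {x r y s : ℕ} (h : r * y = x * s + 1) (hs : 0 < s)
    (hsr : s < r) : y ≤ x := by
  have hy : 0 < y := right_num_pos_of_farey h
  have : y * (s + 1) ≤ y * r := by gcongr; exact hsr
  exact le_of_mul_le_mul_right (a := s) (by lia) hs

theorem exists_sbMatrix_eq {x r y s : ℕ} (h : r * y = x * s + 1) (hys : y ≤ s) :
    ∃ u, sbMatrix u = !![(y : ℤ), x + y; s, r + s] := by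
  have hy : 0 < y := right_num_pos_of_farey h
  have hxr : x < r := left_num_lt_den_of_farey h hys
  obtain hrs | rfl | hsr := lt_trichotomy r s
  · have hxy : x < y := left_num_lt_right_num_of_farey h hrs.le
    obtain ⟨t, ht, rfl⟩ := exists_pos_add_of_lt' hrs
    obtain ⟨z, rfl⟩ := Nat.exists_eq_add_of_le hxy.le
    have h' : r * z = x * t + 1 := by lia
    obtain ⟨u, hu⟩ := exists_sbMatrix_eq h' (right_num_le_den_of_farey h' ht hxr)
    refine ⟨u ++ [.L], ?_⟩
    rw [sbMatrix_append_singleton, hu, LR.stepMatrix, Matrix.mul_fin_two]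
    push_cast
    ring_nf
  · have hr : r ∣ 1 := (Nat.dvd_add_right (dvd_mul_left r x)).mp (h ▸ dvd_mul_right r y)
    obtain rfl : r = 1 := Nat.dvd_one.mp hr
    obtain rfl : x = 0 := by lia
    obtain rfl : y = 1 := by lia
    exact ⟨[], by simp [sbMatrix_nil]⟩
  · have hyx : y ≤ x := right_num_le_left_num_of_farey h (hy.trans_le hys) hsr
    obtain ⟨t, rfl⟩ := Nat.exists_eq_add_of_le hsr.le
    obtain ⟨z, rfl⟩ := Nat.exists_eq_add_of_le hyx
    have h' : t * y = z * s + 1 := by lia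
    obtain ⟨u, hu⟩ := exists_sbMatrix_eq h' hys
    refine ⟨u ++ [.R], ?_⟩
    rw [sbMatrix_append_singleton, hu, LR.stepMatrix, Matrix.mul_fin_two]
    push_cast
    ring_nf
termination_by r + s

theorem IsParents.eq_mediant {p q x r y s : ℕ} (hq : 0 < q) (hpq : p.Coprime q)
    (h : IsParents x r y s ((p : ℚ) / q)) : p = x + y ∧ q = r + s := by
  obtain ⟨hr, -, hfarey, hmediant⟩ := h
  have hcop : (x + y).Coprime (r + s) := coprime_of_farey (y := y) (s := s) (by lia)
  have := Rat.div_int_inj (a := p) (b := q) (c := (x + y : ℕ)) (d := (r + s : ℕ))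
    (by lia) (by lia) (by simpa using hpq) (by simpa only [Int.natAbs_natCast] using hcop)
    (by push_cast; exact hmediant)
  lia

/-- for an irreducible fraction `p/q` with `0 < p < q` and pair of parents
`(x/r, y/s)`, one has `i(r(w(p/q))) = w(s/q)`, where `r` is word reversal and `i`
exchanges the letters `L` and `R`. -/
theorem flip_rev_word_eq (p q x r y s : ℕ) (hp : 0 < p) (hpq : p < q)
    (hcop : Nat.Coprime p q) (hpar : IsParents x r y s ((p : ℚ) / (q : ℚ))) :
    ((w ((p : ℚ) / (q : ℚ))).reverse).map LR.flip = w ((s : ℚ) / (q : ℚ)) := by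
  obtain ⟨rfl, rfl⟩ := hpar.eq_mediant (hp.trans hpq) hcop
  obtain ⟨-, hs, hfarey, -⟩ := hpar
  have hys : y ≤ s := by
    by_contra! hsy
    exact hsy.not_ge (right_num_le_den_of_farey hfarey hs (by lia))
  have hcop' : s.Coprime (r + s) := coprime_of_farey (y := y) (s := x + y) (by lia)
  obtain ⟨u, hu⟩ := exists_sbMatrix_eq hfarey hys
  have hu' : sbMatrix (u.map LR.flip).reverse = !![(y : ℤ), s; x + y, r + s] := by
    rw [← transpose_sbMatrix, hu]
    simp [← Matrix.ext_iff, Fin.forall_fin_two]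
  have hpath : sbPath (x + y) (r + s) = u := sbPath_eq_of_sbMatrix (by simp [hu]) (by simp [hu])
  have hpath' : sbPath s (r + s) = (u.map LR.flip).reverse :=
    sbPath_eq_of_sbMatrix (by simp [hu']) (by simp [hu'])
  rw [w_div (by lia) hcop, w_div (by lia) hcop', hpath, hpath', List.reverse_reverse,
    List.reverse_reverse]
end

section
/- Let p/q be an irreducible fraction with 0 < p < q, p odd and q odd, let (x/r, y/s) be its pair of parents, and write p/q = [0, a1, …, an] with n even and a1, …, an positive integers. Then N0(a1, …, an) is even if and only if y is even, and N0(a1, …, an) is odd if and only if x is even. -/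
/-- `cf [a₀, a₁, …, aₙ]` is the continued fraction
`a₀ + 1/(a₁ + 1/(a₂ + ⋯ + 1/aₙ))`. -/
def cf : List ℕ → ℚ
  | [] => 0
  | [a] => (a : ℚ)
  | a :: t => (a : ℚ) + 1 / cf t

/-- `N₀(a₁, …, aₙ)`: the number of even integers among `a₁, …, aₙ`. -/
def N0 (l : List ℕ) : ℕ := (l.filter (fun a => a % 2 = 0)).length

/-!
For positive `a₁, …, aₙ` with `n` even, the product of the matrices `!![aᵢ, 1; 1, 0]` is
`!![q, u; p, v]` with `p / q = [0, a₁, …, aₙ]`, determinant `1` and `u ≤ q`. The matrix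
`!![r + s, s; x + y, y]` of the parents of `p / q` has the same properties. As determinant `1`
fixes `u` modulo `q`, the two matrices coincide.

Modulo `2`, a factor with `a` even is a transposition of the three nonzero vectors of `𝔽₂²` and
one with `a` odd is a 3-cycle, so the parity of `N₀` is the sign of the product in
`GL₂(𝔽₂) ≅ S₃`. As a polynomial in the entries this sign is `q u + p v + u p`, which reduces to
`v = y` when `p` and `q` are odd.
-/

theorem cf_zero_cons (a : ℕ) (l : List ℕ) : cf (0 :: a :: l) = 1 / (a + cf (0 :: l)) := by
  cases l <;> simp [cf]

theorem natCast_N0_cons (a : ℕ) (l : List ℕ) : (N0 (a :: l) : ZMod 2) = N0 l + a + 1 := by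
  rcases Nat.even_or_odd a with ha | ha
  · simp [N0, Nat.even_iff.1 ha, ha.natCast_zmod_two]
  · simp [N0, Nat.odd_iff.1 ha, ha.natCast_zmod_two, add_assoc, CharTwo.add_self_eq_zero]

theorem coprime_of_mul_eq_mul_add_one {p q u v : ℕ} (h : q * v = u * p + 1) : p.Coprime q := by
  have hZ : (q : ℤ) * v = u * p + 1 := mod_cast h
  exact Nat.isCoprime_iff_coprime.1 ⟨-u, v, by linear_combination hZ⟩

theorem eq_and_eq_of_div_eq_div_of_coprime {a b c d : ℕ} (hb : 0 < b) (hd : 0 < d)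
    (hab : a.Coprime b) (hcd : c.Coprime d) (h : (a : ℚ) / b = c / d) : a = c ∧ b = d := by
  exact_mod_cast Rat.div_int_inj (a := a) (b := b) (c := c) (d := d) (mod_cast hb) (mod_cast hd)
    hab hcd (by simpa using h)

theorem eq_and_eq_of_mul_sub_mul_eq_one {q p u v s y : ℤ} (hv : q * v - u * p = 1)
    (hy : q * y - s * p = 1) (hus : |u - s| < q) : u = s ∧ v = y := by
  have hdvd : q ∣ u - s := ⟨u * y - s * v, by linear_combination s * hv - u * hy⟩
  obtain rfl : u = s := sub_eq_zero.1 (Int.eq_zero_of_abs_lt_dvd hdvd hus)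
  have hq : q ≠ 0 := ((abs_nonneg _).trans_lt hus).ne'
  exact ⟨rfl, mul_left_cancel₀ hq (by linear_combination hv - hy)⟩

theorem IsParents.mediant_mul_eq {x r y s : ℕ} {α : ℚ} (h : IsParents x r y s α) :
    (r + s) * y = s * (x + y) + 1 := by
  linear_combination h.2.2.1

/-- The matrix `!![a₁, 1; 1, 0] * ⋯ * !![aₙ, 1; 1, 0]` of continuants of `[a₁, …, aₙ]`. Its first
column holds the denominator and the numerator, in this order, of `[0, a₁, …, aₙ]`. -/
def cfMatrix (l : List ℕ) : Matrix (Fin 2) (Fin 2) ℕ :=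
  (l.map fun a => !![a, 1; 1, 0]).prod

theorem cfMatrix_nil : cfMatrix [] = 1 := rfl

theorem cfMatrix_cons (a : ℕ) (l : List ℕ) :
    cfMatrix (a :: l) =
      !![a * cfMatrix l 0 0 + cfMatrix l 1 0, a * cfMatrix l 0 1 + cfMatrix l 1 1;
        cfMatrix l 0 0, cfMatrix l 0 1] := by
  ext i j
  fin_cases i <;> fin_cases j <;> simp [cfMatrix, Matrix.mul_apply, Fin.sum_univ_two]

theorem cfMatrix_concat (l : List ℕ) (a : ℕ) :
    cfMatrix (l ++ [a]) =
      !![cfMatrix l 0 0 * a + cfMatrix l 0 1, cfMatrix l 0 0;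
        cfMatrix l 1 0 * a + cfMatrix l 1 1, cfMatrix l 1 0] := by
  ext i j
  fin_cases i <;> fin_cases j <;> simp [cfMatrix, Matrix.mul_apply, Fin.sum_univ_two]

theorem det_cfMatrix (R : Type*) [CommRing R] (l : List ℕ) :
    (cfMatrix l 0 0 * cfMatrix l 1 1 - cfMatrix l 0 1 * cfMatrix l 1 0 : R) =
      (-1) ^ l.length := by
  induction l with
  | nil => simp [cfMatrix_nil]
  | cons a l ih =>
    simp only [cfMatrix_cons, Matrix.of_apply, Matrix.cons_val, Nat.cast_add, Nat.cast_mul,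
      List.length_cons, pow_succ]
    linear_combination -ih

theorem cfMatrix_zero_zero_pos {l : List ℕ} (hl : ∀ a ∈ l, 0 < a) : 0 < cfMatrix l 0 0 := by
  induction l with
  | nil => simp [cfMatrix_nil]
  | cons a l ih =>
    obtain ⟨ha, hl⟩ := List.forall_mem_cons.1 hl
    exact Nat.add_pos_left (Nat.mul_pos ha (ih hl)) _

theorem cfMatrix_zero_one_le {l : List ℕ} (hl : ∀ a ∈ l, 0 < a) :
    cfMatrix l 0 1 ≤ cfMatrix l 0 0 := by
  rcases l.eq_nil_or_concat' with rfl | ⟨l, a, rfl⟩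
  · simp [cfMatrix_nil]
  · have ha : 0 < a := hl a (by simp)
    simpa [cfMatrix_concat] using Nat.le_add_right_of_le (Nat.le_mul_of_pos_right _ ha)

theorem cf_zero_cons_eq_div {l : List ℕ} (hl : ∀ a ∈ l, 0 < a) :
    cf (0 :: l) = (cfMatrix l 1 0 : ℚ) / cfMatrix l 0 0 := by
  induction l with
  | nil => simp [cf, cfMatrix_nil]
  | cons a l ih =>
    have hl' := (List.forall_mem_cons.1 hl).2
    have hq : (cfMatrix l 0 0 : ℚ) ≠ 0 := mod_cast (cfMatrix_zero_zero_pos hl').ne'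
    simp only [cf_zero_cons, ih hl', cfMatrix_cons, Matrix.of_apply, Matrix.cons_val,
      Nat.cast_add, Nat.cast_mul]
    field_simp

theorem sign_polynomial_cons {q u p v : ZMod 2} (hdet : q * v - u * p = 1) (a : ZMod 2) :
    (a * q + p) * (a * u + v) + q * u + (a * u + v) * q = q * u + p * v + u * p + a + 1 := by
  have ha : a ^ 2 = a := ZMod.pow_card a
  have h2 : (2 : ZMod 2) = 0 := CharTwo.two_eq_zero
  linear_combination q * u * ha + (a + 1) * hdet + a * u * (q + p) * h2

theorem natCast_N0_eq_cfMatrix (l : List ℕ) :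
    (N0 l : ZMod 2) = cfMatrix l 0 0 * cfMatrix l 0 1 + cfMatrix l 1 0 * cfMatrix l 1 1 +
      cfMatrix l 0 1 * cfMatrix l 1 0 := by
  induction l with
  | nil => simp [N0, cfMatrix_nil]
  | cons a l ih =>
    have hdet := det_cfMatrix (ZMod 2) l
    rw [CharTwo.neg_eq, one_pow] at hdet
    rw [natCast_N0_cons, ih]
    simpa [cfMatrix_cons] using (sign_polynomial_cons hdet a).symm

theorem cfMatrix_eq_of_isParents {x r y s : ℕ} {l : List ℕ}
    (hpar : IsParents x r y s (cf (0 :: l))) (hlen : Even l.length) (hpos : ∀ a ∈ l, 0 < a) :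
    cfMatrix l = !![r + s, s; x + y, y] := by
  have hden : 0 < cfMatrix l 0 0 := cfMatrix_zero_zero_pos hpos
  have hle : cfMatrix l 0 1 ≤ cfMatrix l 0 0 := cfMatrix_zero_one_le hpos
  have hdet := det_cfMatrix ℤ l
  rw [hlen.neg_one_pow] at hdet
  have hmed := hpar.mediant_mul_eq
  obtain ⟨hr, hs, -, hα⟩ := hpar
  obtain ⟨hp, hq⟩ : cfMatrix l 1 0 = x + y ∧ cfMatrix l 0 0 = r + s :=
    eq_and_eq_of_div_eq_div_of_coprime hden (by lia)
      (coprime_of_mul_eq_mul_add_one (u := cfMatrix l 0 1) (v := cfMatrix l 1 1)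
        (by zify; linear_combination hdet))
      (coprime_of_mul_eq_mul_add_one hmed)
      (by rw [← cf_zero_cons_eq_div hpos, hα]; push_cast; rfl)
  obtain ⟨hu, hv⟩ : (cfMatrix l 0 1 : ℤ) = s ∧ (cfMatrix l 1 1 : ℤ) = y := by
    refine eq_and_eq_of_mul_sub_mul_eq_one hdet ?_ (abs_lt.2 (by lia))
    rw [hp, hq]
    zify at hmed
    push_cast
    linear_combination hmed
  rw [Matrix.eta_fin_two (cfMatrix l), hp, hq, Nat.cast_inj.1 hu, Nat.cast_inj.1 hv]

theorem natCast_N0_eq_of_isParents {x r y s : ℕ} {l : List ℕ}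
    (hpar : IsParents x r y s (cf (0 :: l))) (hlen : Even l.length) (hpos : ∀ a ∈ l, 0 < a) :
    (N0 l : ZMod 2) = ↑(r + s) * s + ↑(x + y) * y + s * ↑(x + y) := by
  simp [natCast_N0_eq_cfMatrix, cfMatrix_eq_of_isParents hpar hlen hpos]

/-- let `p/q` be irreducible with `0 < p < q`, `p` odd, `q` odd, with
pair of parents `(x/r, y/s)`, and let `p/q = [0, a₁, …, aₙ]` with `n` even and all
`aᵢ` positive.  Then `N₀(a₁, …, aₙ)` is even iff `y` is even, and `N₀(a₁, …, aₙ)` is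
odd iff `x` is even. -/
theorem N0_parity_of_one_one_type (p q : ℕ) (hp : 0 < p) (hpq : p < q)
    (hcop : Nat.Coprime p q) (hpodd : Odd p) (hqodd : Odd q)
    (x r y s : ℕ) (hpar : IsParents x r y s ((p : ℚ) / (q : ℚ)))
    (l : List ℕ) (hlen : Even l.length) (hpos : ∀ a ∈ l, 0 < a)
    (hcf : cf (0 :: l) = (p : ℚ) / (q : ℚ)) :
    (Even (N0 l) ↔ Even y) ∧ (Odd (N0 l) ↔ Even x) := by
  obtain ⟨rfl, rfl⟩ : p = x + y ∧ q = r + s :=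
    eq_and_eq_of_div_eq_div_of_coprime (hp.trans hpq) (Nat.add_pos_left hpar.1 _) hcop
      (coprime_of_mul_eq_mul_add_one hpar.mediant_mul_eq) (mod_cast hpar.2.2.2)
  have hN0 : (N0 l : ZMod 2) = y := by
    rw [natCast_N0_eq_of_isParents (hcf ▸ hpar) hlen hpos, hpodd.natCast_zmod_two,
      hqodd.natCast_zmod_two]
    linear_combination (s : ZMod 2) * CharTwo.two_eq_zero (R := ZMod 2)
  have hiff : Even (N0 l) ↔ Even y := by
    rw [← ZMod.natCast_eq_zero_iff_even, hN0, ZMod.natCast_eq_zero_iff_even]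
  have hyx : Odd y ↔ Even x := Nat.odd_add'.1 hpodd
  exact ⟨hiff, by rw [← hyx, ← Nat.not_even_iff_odd, hiff, Nat.not_even_iff_odd]⟩
end

section
/- The weight wt is well defined: if [a0, a1, …, an] = [b0, b1, …, bm] as rational numbers, where a0, b0 are nonnegative integers and a1, …, an, b1, …, bm are positive integers, then the weight computed from the first expansion equals the weight computed from the second expansion. -/
/-- The alternating sum `a₀ - a₁ + a₂ - ⋯` of a list. -/
def altSum : List ℕ → ℤ
  | [] => 0
  | a :: t => (a : ℤ) - altSum t

/-- The weight of the continued fraction expansion `[a₀, a₁, …, aₙ]`: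
`a₀ - a₁ + a₂ - ⋯ + (-1)ⁿ aₙ` if `n` is even, and
`a₀ - a₁ + a₂ - ⋯ + (-1)ⁿ aₙ + 2` if `n` is odd. -/
def wtExp (a₀ : ℕ) (t : List ℕ) : ℤ :=
  altSum (a₀ :: t) + (if Even t.length then 0 else 2)

/-!
The Euclidean algorithm gives every rational number a preferred expansion, hence a weight `w` that
depends on the number alone. The weight of an arbitrary expansion `[a, b, …]` with tail value
`x = [b, …] ≥ 1` obeys the recursion `w (a + 1 / x) = a + 2 - w x`, and so does `w`. The delicate
case is `x = 1`, where the Euclidean algorithm stops at `a + 1`: there the recursion holds because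
`w 1 = 1`, which accounts for the ambiguity `[…, a, 1] = […, a + 1]` between expansions.
-/

lemma den_inv_fract_lt {q : ℚ} (hq : Int.fract q ≠ 0) : (Int.fract q)⁻¹.den < q.den := by
  have num_lt_den : (Int.fract q).num < (Int.fract q).den :=
    Rat.num_lt_denom_iff.mpr (Int.fract_lt_one q)
  have num_nonneg : 0 ≤ (Int.fract q).num := Rat.num_nonneg.mpr (Int.fract_nonneg q)
  rw [Rat.den_intFract] at num_lt_den
  rw [Rat.den_inv_of_ne_zero hq]
  omega

/-- The weight `wt(α)` of a rational number `α`, computed from the expansion that the Euclidean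
algorithm produces. It is defined by the same recursion for all rational numbers, although only
nonnegative ones have an expansion in natural numbers. -/
def wt (q : ℚ) : ℤ :=
  if Int.fract q = 0 then ⌊q⌋ else ⌊q⌋ + 2 - wt (Int.fract q)⁻¹
termination_by q.den
decreasing_by exact den_inv_fract_lt ‹_›

lemma wt_intCast (n : ℤ) : wt n = n := by
  rw [wt, if_pos (Int.fract_intCast n), Int.floor_intCast]

lemma wt_intCast_add_inv (n : ℤ) {x : ℚ} (hx : 1 ≤ x) : wt (n + x⁻¹) = n + 2 - wt x := by
  rcases hx.eq_or_lt with rfl | one_lt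
  · have wt_one : wt 1 = 1 := mod_cast wt_intCast 1
    have wt_add_one : wt (n + 1) = n + 1 := mod_cast wt_intCast (n + 1)
    rw [inv_one, wt_add_one, wt_one]
    ring
  · have inv_pos : 0 < x⁻¹ := by positivity
    have inv_lt_one : x⁻¹ < 1 := inv_lt_one_of_one_lt₀ one_lt
    have floor_eq : ⌊n + x⁻¹⌋ = n := by
      rw [Int.floor_intCast_add, Int.floor_eq_zero_iff.mpr ⟨inv_pos.le, inv_lt_one⟩, add_zero]
    have fract_eq : Int.fract (n + x⁻¹) = x⁻¹ := by
      rw [Int.fract_intCast_add, Int.fract_eq_self.mpr ⟨inv_pos.le, inv_lt_one⟩]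
    rw [wt, fract_eq, if_neg inv_pos.ne', floor_eq, inv_inv]

-- For `t = []` the right-hand side is `a`, since `cf [] = 0` and `0⁻¹ = 0`.
lemma cf_cons (a : ℕ) (t : List ℕ) : cf (a :: t) = a + (cf t)⁻¹ := by
  cases t <;> simp [cf]

lemma cf_nonneg (t : List ℕ) : 0 ≤ cf t := by
  induction t with
  | nil => exact le_rfl
  | cons a t ih =>
    rw [cf_cons]
    positivity

lemma one_le_cf_cons {a : ℕ} (ha : 0 < a) (t : List ℕ) : 1 ≤ cf (a :: t) := by
  rw [cf_cons]
  exact le_add_of_le_of_nonneg (Nat.one_le_cast.mpr ha) (inv_nonneg.mpr (cf_nonneg t))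

lemma wtExp_nil (a : ℕ) : wtExp a [] = a := by
  simp [wtExp, altSum]

lemma wtExp_cons (a b : ℕ) (t : List ℕ) : wtExp a (b :: t) = a + 2 - wtExp b t := by
  simp only [wtExp, altSum, List.length_cons, Nat.even_add_one, ite_not]
  split_ifs <;> ring

theorem wtExp_eq_wt_cf (a : ℕ) {t : List ℕ} (ht : ∀ x ∈ t, 0 < x) :
    wtExp a t = wt (cf (a :: t)) := by
  induction t generalizing a with
  | nil => exact (wtExp_nil a).trans (wt_intCast a).symm
  | cons b t ih =>
    obtain ⟨hb, ht⟩ := List.forall_mem_cons.mp ht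
    calc
      wtExp a (b :: t) = a + 2 - wtExp b t := wtExp_cons a b t
      _ = a + 2 - wt (cf (b :: t)) := by rw [ih b ht]
      _ = wt (a + (cf (b :: t))⁻¹) := (wt_intCast_add_inv a (one_le_cf_cons hb t)).symm
      _ = wt (cf (a :: b :: t)) := by rw [cf_cons a]

/-- the weight is well defined: two continued fraction expansions
`[a₀, a₁, …, aₙ] = [b₀, b₁, …, b_m]` (with `a₀, b₀ ≥ 0` and all the other entries
positive) representing the same rational number have equal weights. -/
theorem wt_well_defined (a₀ b₀ : ℕ) (l m : List ℕ)
    (hl : ∀ x ∈ l, 0 < x) (hm : ∀ x ∈ m, 0 < x)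
    (h : cf (a₀ :: l) = cf (b₀ :: m)) :
    wtExp a₀ l = wtExp b₀ m := by
  rw [wtExp_eq_wt_cf a₀ hl, wtExp_eq_wt_cf b₀ hm, h]
end
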